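/- arXiv:1311.2011 — 2 statements merged into one kernel-verified Lean document; each statement's English description precedes it below -/
import Mathlib

section
/- Let X be a Tychonoff topological space. If C_k(X) is productively countably tight, then X is productively Lindelöf. -/
open Set Topology

universe u

/-- A bornology on `X`: a collection of subsets covering `X`, closed under
taking subsets and under finite unions. -/
structure IsBornology {X : Type*} (𝔅 : Set (Set X)) : Prop where
  covers : ⋃₀ 𝔅 = Set.univ
  empty_mem : ∅ ∈ 𝔅
  subset_mem : ∀ ⦃A B : Set X⦄, B ∈ 𝔅 → A ⊆ B → A ∈ 𝔅
  union_mem : ∀ ⦃A B : Set X⦄, A ∈ 𝔅 → B ∈ 𝔅 → A ∪ B ∈ 𝔅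

/-- `𝔅` has a compact base: every member of `𝔅` is contained in a compact member of `𝔅`. -/
def HasCompactBase {X : Type*} [TopologicalSpace X] (𝔅 : Set (Set X)) : Prop :=
  ∀ B ∈ 𝔅, ∃ K ∈ 𝔅, IsCompact K ∧ B ⊆ K

/-- The set of continuous real-valued functions on `X` (as a bare type, to be
topologized by a bornology). -/
def CFn (X : Type u) [TopologicalSpace X] : Type u := {f : X → ℝ // Continuous f}

/-- The zero function as an element of `CFn X`. -/
def zeroFn (X : Type u) [TopologicalSpace X] : CFn X := ⟨fun _ => 0, continuous_const⟩

/-- The basic "ball" `⟨B, ε⟩[f] = {g : ∀ x ∈ B, |f x − g x| < ε}`. -/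
def unifBall {X : Type u} [TopologicalSpace X] (f : CFn X) (B : Set X) (ε : ℝ) :
    Set (CFn X) :=
  {g | ∀ x ∈ B, |f.1 x - g.1 x| < ε}

/-- The topology of uniform convergence on members of a bornology `𝔅`:
a set is open iff around each of its points it contains a basic ball
`⟨B, ε⟩[f]` with `B ∈ 𝔅`, `ε > 0`.  This makes `CFn X` into `C_𝔅(X)`. -/
def bornTopology {X : Type u} [TopologicalSpace X] (𝔅 : Set (Set X))
    (hB : IsBornology 𝔅) : TopologicalSpace (CFn X) where
  IsOpen U := ∀ f ∈ U, ∃ B ∈ 𝔅, ∃ ε > (0 : ℝ), unifBall f B ε ⊆ U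
  isOpen_univ := fun f _ => ⟨∅, hB.empty_mem, 1, one_pos, fun _ _ => trivial⟩
  isOpen_inter := by
    intro U V hU hV f hf
    obtain ⟨B₁, hB₁, ε₁, hε₁, h₁⟩ := hU f hf.1
    obtain ⟨B₂, hB₂, ε₂, hε₂, h₂⟩ := hV f hf.2
    refine ⟨B₁ ∪ B₂, hB.union_mem hB₁ hB₂, min ε₁ ε₂, lt_min hε₁ hε₂, fun g hg => ⟨?_, ?_⟩⟩
    · exact h₁ fun x hx => lt_of_lt_of_le (hg x (Or.inl hx)) (min_le_left _ _)
    · exact h₂ fun x hx => lt_of_lt_of_le (hg x (Or.inr hx)) (min_le_right _ _)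
  isOpen_sUnion := by
    intro S hS f hf
    obtain ⟨U, hU, hfU⟩ := hf
    obtain ⟨B, hB', ε, hε, h⟩ := hS U hU f hfU
    exact ⟨B, hB', ε, hε, h.trans (Set.subset_sUnion_of_mem hU)⟩

/-- `Ω_z`: the family of all subsets of `Z ∖ {z}` having `z` in their closure. -/
def OmegaAt {Z : Type*} [TopologicalSpace Z] (z : Z) : Set (Set Z) :=
  {A | A ⊆ {z}ᶜ ∧ z ∈ closure A}

/-- `𝒢` is a `𝔅`-cover of `X`: every member of `𝔅` is contained in a member of `𝒢`. -/
def IsBCover {X : Type*} (𝔅 : Set (Set X)) (𝒢 : Set (Set X)) : Prop :=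
  ∀ B ∈ 𝔅, ∃ G ∈ 𝒢, B ⊆ G

/-- `𝒪_𝔅`: the family of all open `𝔅`-covers of `X`. -/
def OpenBCovers {X : Type*} [TopologicalSpace X] (𝔅 : Set (Set X)) : Set (Set (Set X)) :=
  {𝒰 | (∀ U ∈ 𝒰, IsOpen U) ∧ IsBCover 𝔅 𝒰}

/-- `𝒢` is a K-cover of `X`: every compact subset of `X` is contained in a member of `𝒢`. -/
def IsKCover {X : Type*} [TopologicalSpace X] (𝒢 : Set (Set X)) : Prop :=
  ∀ K : Set X, IsCompact K → ∃ G ∈ 𝒢, K ⊆ G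

/-- `𝒦`: the family of all open K-covers of `X`. -/
def KCovers (X : Type*) [TopologicalSpace X] : Set (Set (Set X)) :=
  {𝒰 | (∀ U ∈ 𝒰, IsOpen U) ∧ IsKCover 𝒰}

/-- Player II has a winning strategy in the game `G₁(𝒜, 𝒞)` (of length `ω`):
a function assigning to each finite sequence `(A₀, …, Aₙ)` of moves of player I an
element of `Aₙ`, such that in any play following it the chosen points form a member of `𝒞`. -/
def G1WinII {T : Type*} (𝒜 𝒞 : Set (Set T)) : Prop :=
  ∃ σ : (n : ℕ) → (Fin (n + 1) → Set T) → T,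
    (∀ (n : ℕ) (h : Fin (n + 1) → Set T), (∀ i, h i ∈ 𝒜) → σ n h ∈ h (Fin.last n)) ∧
    ∀ A : ℕ → Set T, (∀ n, A n ∈ 𝒜) →
      (Set.range fun n => σ n fun i => A i.1) ∈ 𝒞

/-- Player II has a winning strategy in the transfinite game `G₁^α(𝒜, 𝒞)` of length `α`. -/
def G1WinIIOrd {T : Type*} (α : Ordinal.{0}) (𝒜 𝒞 : Set (Set T)) : Prop :=
  ∃ σ : (γ : {γ : Ordinal.{0} // γ < α}) → ({δ : Ordinal.{0} // δ ≤ γ.1} → Set T) → T,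
    (∀ (γ : {γ : Ordinal.{0} // γ < α}) (h : {δ : Ordinal.{0} // δ ≤ γ.1} → Set T),
      (∀ δ, h δ ∈ 𝒜) → σ γ h ∈ h ⟨γ.1, le_rfl⟩) ∧
    ∀ A : {γ : Ordinal.{0} // γ < α} → Set T, (∀ γ, A γ ∈ 𝒜) →
      (Set.range fun γ : {γ : Ordinal.{0} // γ < α} =>
        σ γ fun δ => A ⟨δ.1, lt_of_le_of_lt δ.2 γ.2⟩) ∈ 𝒞

/-- The selection principle `S₁(𝒜, 𝒞)`. -/
def S1 {T : Type*} (𝒜 𝒞 : Set (Set T)) : Prop :=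
  ∀ A : ℕ → Set T, (∀ n, A n ∈ 𝒜) →
    ∃ a : ℕ → T, (∀ n, a n ∈ A n) ∧ Set.range a ∈ 𝒞

/-- `Z` has countable tightness. -/
def CountablyTight (Z : Type*) [TopologicalSpace Z] : Prop :=
  ∀ (z : Z) (A : Set Z), z ∈ closure A → ∃ B ⊆ A, B.Countable ∧ z ∈ closure B

/-- `Z` is productively countably tight: `Z × Y` has countable tightness
for every countably tight space `Y`. -/
def ProductivelyCountablyTight (Z : Type u) [TopologicalSpace Z] : Prop :=
  ∀ (Y : Type u) [TopologicalSpace Y], CountablyTight Y → CountablyTight (Z × Y)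

/-- `Z` has tightness at most `κ`. -/
def TightnessLE (Z : Type u) [TopologicalSpace Z] (κ : Cardinal.{u}) : Prop :=
  ∀ (z : Z) (A : Set Z), z ∈ closure A → ∃ B ⊆ A, Cardinal.mk B ≤ κ ∧ z ∈ closure B

/-- `κ ∈ Sp(Z)`: for every space `Y` of tightness at most `κ`, the product `Z × Y`
has tightness at most `κ`. -/
def MemSp (Z : Type u) [TopologicalSpace Z] (κ : Cardinal.{u}) : Prop :=
  ∀ (Y : Type u) [TopologicalSpace Y], TightnessLE Y κ → TightnessLE (Z × Y) κ

/-- `G` is a `G_κ`-set: an intersection of at most `κ` open sets. -/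
def IsGKappaSet {X : Type u} [TopologicalSpace X] (κ : Cardinal.{u}) (G : Set X) : Prop :=
  ∃ 𝒪 : Set (Set X), (∀ O ∈ 𝒪, IsOpen O) ∧ Cardinal.mk 𝒪 ≤ κ ∧ G = ⋂₀ 𝒪

/-- `G` is a `G_δ`-set: an intersection of countably many open sets. -/
def IsGDeltaSet {X : Type*} [TopologicalSpace X] (G : Set X) : Prop :=
  ∃ 𝒪 : Set (Set X), (∀ O ∈ 𝒪, IsOpen O) ∧ 𝒪.Countable ∧ G = ⋂₀ 𝒪

/-- A family `ℙ` of collections of subsets of `Z` is `κ`-singular at `z`. -/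
def KappaSingularAt {Z : Type u} [TopologicalSpace Z] (κ : Cardinal.{u})
    (ℙ : Set (Set (Set Z))) (z : Z) : Prop :=
  (∀ ξ ∈ ℙ, ∀ A ∈ ξ, Cardinal.mk A ≤ κ) ∧
  (∀ ξ ∈ ℙ, ∀ F : Finset (Set Z), ↑F ⊆ ξ → (⋂₀ (F : Set (Set Z))).Nonempty) ∧
  (∀ O : Set Z, IsOpen O → z ∈ O → ∃ ξ ∈ ℙ, ∃ A ∈ ξ, A ⊆ O) ∧
  (∀ ℰ ⊆ ℙ, Cardinal.mk ℰ ≤ κ → ∃ c : Set (Set Z) → Set Z,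
    (∀ ξ ∈ ℰ, c ξ ∈ ξ) ∧ z ∉ closure (⋃ ξ ∈ ℰ, c ξ))

/-- `X` is an Alster space. -/
def Alster (X : Type*) [TopologicalSpace X] : Prop :=
  ∀ 𝒢 : Set (Set X), (∀ G ∈ 𝒢, IsGDeltaSet G) → IsKCover 𝒢 →
    ∃ 𝒢' ⊆ 𝒢, 𝒢'.Countable ∧ ⋃₀ 𝒢' = Set.univ

/-- `X` is strongly Alster. -/
def StronglyAlster (X : Type*) [TopologicalSpace X] : Prop :=
  ∀ 𝒢 : Set (Set X), (∀ G ∈ 𝒢, IsGDeltaSet G) → IsKCover 𝒢 →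
    ∃ 𝒢' ⊆ 𝒢, 𝒢'.Countable ∧ IsKCover 𝒢'

/-- `X` is productively Lindelöf. -/
def ProductivelyLindelof (X : Type u) [TopologicalSpace X] : Prop :=
  ∀ (Y : Type u) [TopologicalSpace Y], LindelofSpace Y → LindelofSpace (X × Y)

/-- `X` is hemicompact. -/
def Hemicompact (X : Type*) [TopologicalSpace X] : Prop :=
  ∃ K : ℕ → Set X, (∀ n, IsCompact (K n)) ∧ ∀ C : Set X, IsCompact C → ∃ n, C ⊆ K n

/-!
Test `C_k(X)` against the sequential fan whose spokes are indexed by the compact subsets of `X`.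
Given a K-cover by `G_δ` sets `G K = ⋂ n, U K n ⊇ K`, let `f K n` vanish on `K` and equal `1` off
`U K 0 ∩ ⋯ ∩ U K n`. Then `(0, apex)` is a limit of the points `(f K n, point K n)`, hence of
countably many of them. Evaluating at `x` forces `f K n x < 1` for infinitely many `n` on a single
spoke `K` among those countably many, that is, `x ∈ G K`. So `X` is Alster, and for an Alster space
the tube lemma turns an open cover of `X × Y`, with `Y` Lindelöf, into a K-cover of `X` by `G_δ`
sets `G` for which `G × Y` is countably covered.
-/

open Filter TopologicalSpace

theorem isGDeltaSet_iff_isGδ {X : Type*} [TopologicalSpace X] {G : Set X} :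
    IsGDeltaSet G ↔ IsGδ G :=
  Iff.rfl

theorem CountablyTight.exists_countable_mem_closure_image {Z ι : Type*} [TopologicalSpace Z]
    (h : CountablyTight Z) {g : ι → Z} {z : Z} (hz : z ∈ closure (range g)) :
    ∃ s : Set ι, s.Countable ∧ z ∈ closure (g '' s) := by
  obtain ⟨B, hBg, hB, hzB⟩ := h z (range g) hz
  obtain ⟨s, -, hs⟩ := exists_subset_bijOn (g ⁻¹' B) g
  rw [image_preimage_eq_of_subset hBg] at hs
  exact ⟨s, hs.mapsTo.countable_of_injOn hs.injOn hB, hs.image_eq.symm ▸ hzB⟩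

/-- The sequential (Fréchet–Urysohn) fan: convergent sequences `point i 0, point i 1, …`, one spoke
for each `i : ι`, glued together at their common limit `apex`. -/
inductive SequentialFan (ι : Type*)
  | apex
  | point (i : ι) (n : ℕ)

namespace SequentialFan

variable {ι : Type*}

instance : TopologicalSpace (SequentialFan ι) :=
  nhdsAdjoint apex (⨆ i, map (point i) atTop)

theorem nhds_apex : 𝓝 (apex : SequentialFan ι) = pure apex ⊔ ⨆ i, map (point i) atTop :=
  nhds_nhdsAdjoint_same _ _

theorem nhds_point (i : ι) (n : ℕ) : 𝓝 (point i n) = pure (point i n) :=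
  nhds_nhdsAdjoint_of_ne _ nofun

theorem apex_mem_closure_iff {A : Set (SequentialFan ι)} :
    apex ∈ closure A ↔ apex ∈ A ∨ ∃ i, ∃ᶠ n in atTop, point i n ∈ A := by
  simp only [mem_closure_iff_frequently, nhds_apex, frequently_sup, frequently_pure,
    frequently_iSup, frequently_map]

theorem point_mem_closure_iff {A : Set (SequentialFan ι)} {i : ι} {n : ℕ} :
    point i n ∈ closure A ↔ point i n ∈ A := by
  simp only [mem_closure_iff_frequently, nhds_point, frequently_pure]

theorem tendsto_point (i : ι) : Tendsto (point i) atTop (𝓝 apex) := by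
  rw [nhds_apex]
  exact le_sup_of_le_right (le_iSup (fun i => map (point i) atTop) i)

theorem tendsto_point_curry (l : Filter ι) :
    Tendsto (fun p : ι × ℕ => point p.1 p.2) (l.curry atTop) (𝓝 apex) := fun _ hs =>
  eventually_curry_iff.2 (.of_forall fun i => tendsto_point i hs)

theorem countablyTight (ι : Type*) : CountablyTight (SequentialFan ι) := by
  intro z A hz
  by_cases hzA : z ∈ A
  · exact ⟨{z}, singleton_subset_iff.2 hzA, countable_singleton z, subset_closure rfl⟩
  cases z with
  | point i n => exact absurd (point_mem_closure_iff.1 hz) hzA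
  | apex =>
    obtain ⟨i, hi⟩ := (apex_mem_closure_iff.1 hz).resolve_left hzA
    exact ⟨A ∩ range (point i), inter_subset_left, (countable_range _).mono inter_subset_right,
      apex_mem_closure_iff.2 (.inr ⟨i, hi.mono fun n hn => ⟨hn, n, rfl⟩⟩)⟩

end SequentialFan

section FunctionSpaces

variable {X : Type*} [TopologicalSpace X]

theorem exists_continuousMap_eqOn_zero_one_of_isCompact [CompletelyRegularSpace X] {K U : Set X}
    (hK : IsCompact K) (hU : IsOpen U) (hKU : K ⊆ U) :
    ∃ f : C(X, ℝ), EqOn f 0 K ∧ EqOn f 1 Uᶜ := by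
  -- The Stone–Čech compactification is normal, and the image of `K` is closed in it.
  obtain ⟨V, hV, rfl⟩ := isInducing_stoneCechUnit.isOpen_iff.1 hU
  have hdisj : Disjoint (stoneCechUnit '' K) Vᶜ :=
    disjoint_compl_right_iff_subset.2 (image_subset_iff.2 hKU)
  obtain ⟨f, hf₀, hf₁, -⟩ := exists_continuous_zero_one_of_isClosed
    (hK.image continuous_stoneCechUnit).isClosed hV.isClosed_compl hdisj
  exact ⟨f.comp ⟨stoneCechUnit, continuous_stoneCechUnit⟩,
    fun x hx => hf₀ (mem_image_of_mem _ hx), fun x hx => hf₁ hx⟩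

theorem tendsto_nhds_compactOpen_of_eqOn {Y ι : Type*} [TopologicalSpace Y] {l : Filter ι}
    {K : ι → Compacts X} (hK : Tendsto K l atTop) {f : ι → C(X, Y)} {g : C(X, Y)}
    (hfg : ∀ i, EqOn (f i) g (K i)) : Tendsto f l (𝓝 g) := by
  rw [ContinuousMap.tendsto_nhds_compactOpen]
  intro L hL V _ hgV
  filter_upwards [hK.eventually_ge_atTop ⟨L, hL⟩] with i hLK
  exact hgV.congr ((hfg i).symm.mono hLK)

theorem prodMk_apex_mem_closure_range {Y : Type*} [TopologicalSpace Y]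
    {f : Compacts X × ℕ → C(X, Y)} {g : C(X, Y)} (hfg : ∀ p, EqOn (f p) g p.1) :
    (g, SequentialFan.apex) ∈ closure (range fun p => (f p, SequentialFan.point p.1 p.2)) := by
  have hf : Tendsto f (atTop.curry atTop) (𝓝 g) :=
    tendsto_nhds_compactOpen_of_eqOn (tendsto_fst.mono_left curry_le_prod) hfg
  refine mem_closure_of_frequently_of_tendsto ?_
    (hf.prodMk_nhds (SequentialFan.tendsto_point_curry atTop))
  exact (frequently_curry_iff _).2 (.of_forall fun _ => .of_forall fun _ => mem_range_self _)

theorem exists_frequently_of_prodMk_apex_mem_closure {Z ι : Type*} [TopologicalSpace Z]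
    {f : ι × ℕ → Z} {z : Z} {P : Set (ι × ℕ)}
    (hP : (z, SequentialFan.apex) ∈ closure ((fun p => (f p, SequentialFan.point p.1 p.2)) '' P))
    {O : Set Z} (hO : IsOpen O) (hz : z ∈ O) :
    ∃ i, ∃ᶠ n in atTop, (i, n) ∈ P ∧ f (i, n) ∈ O := by
  have hOP := (hO.preimage continuous_fst).inter_closure ⟨hz, hP⟩
  have hapex : SequentialFan.apex ∈
      closure ((fun p : ι × ℕ => SequentialFan.point p.1 p.2) '' {p ∈ P | f p ∈ O}) := by
    refine map_mem_closure continuous_snd hOP ?_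
    rintro _ ⟨hpO, p, hpP, rfl⟩
    exact mem_image_of_mem _ ⟨hpP, hpO⟩
  obtain ⟨i, hi⟩ := (SequentialFan.apex_mem_closure_iff.1 hapex).resolve_left (by simp)
  exact ⟨i, by simpa using hi⟩

theorem exists_countable_compacts_forall_mem [CompletelyRegularSpace X]
    (h : CountablyTight (C(X, ℝ) × SequentialFan (Compacts X))) {U : Compacts X → ℕ → Set X}
    (hU : ∀ K n, IsOpen (U K n)) (hKU : ∀ (K : Compacts X) n, (K : Set X) ⊆ U K n) :
    ∃ E : Set (Compacts X), E.Countable ∧ ∀ x, ∃ K ∈ E, ∀ n, x ∈ U K n := by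
  have hsep (p : Compacts X × ℕ) :
      ∃ f : C(X, ℝ), EqOn f 0 p.1 ∧ EqOn f 1 (dissipate (U p.1) p.2)ᶜ :=
    exists_continuousMap_eqOn_zero_one_of_isCompact p.1.isCompact
      ((finite_Iic p.2).isOpen_biInter fun n _ => hU p.1 n) (subset_iInter₂ fun n _ => hKU p.1 n)
  choose f hf₀ hf₁ using hsep
  obtain ⟨P, hPc, hP⟩ := h.exists_countable_mem_closure_image
    (prodMk_apex_mem_closure_range (g := 0) hf₀)
  refine ⟨Prod.fst '' P, hPc.image _, fun x => ?_⟩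
  obtain ⟨K, hK⟩ := exists_frequently_of_prodMk_apex_mem_closure hP
    (isOpen_lt (continuous_eval_const x) continuous_const) (show (0 : C(X, ℝ)) x < 1 from one_pos)
  obtain ⟨m, hmP, -⟩ := hK.exists
  refine ⟨K, mem_image_of_mem _ hmP, fun n => ?_⟩
  obtain ⟨k, hnk, -, hk⟩ := frequently_atTop.1 hK n
  have hxk : x ∈ dissipate (U K) k := by
    by_contra hx
    exact hk.ne (hf₁ (K, k) hx)
  exact dissipate_subset hnk hxk

end FunctionSpaces

section Lindelof

variable {X Y : Type*} [TopologicalSpace X] [TopologicalSpace Y]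

theorem exists_isGδ_countable_prod_subset {ι : Type*} {K : Set X} {L : Set Y} (hK : IsCompact K)
    (hL : IsLindelof L) {W : ι → Set (X × Y)} (hW : ∀ i, IsOpen (W i))
    (hKL : K ×ˢ L ⊆ ⋃ i, W i) :
    ∃ G, IsGδ G ∧ K ⊆ G ∧ ∃ t : Set ι, t.Countable ∧ G ×ˢ L ⊆ ⋃ i ∈ t, W i := by
  have tube : ∀ y ∈ L, ∃ (U : Set X) (V : Set Y) (t : Finset ι),
      IsOpen U ∧ V ∈ 𝓝 y ∧ K ⊆ U ∧ U ×ˢ V ⊆ ⋃ i ∈ t, W i := by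
    intro y hy
    obtain ⟨t, ht⟩ := (hK.prod isCompact_singleton).elim_finite_subcover W hW
      ((prod_mono_right (singleton_subset_iff.2 hy)).trans hKL)
    obtain ⟨U, V, hU, hV, hKU, hyV, hUV⟩ := generalized_tube_lemma hK isCompact_singleton
      (isOpen_biUnion fun i _ => hW i) ht
    exact ⟨U, V, t, hU, hV.mem_nhds (hyV rfl), hKU, hUV⟩
  choose! U V t hU hV hKU hUV using tube
  obtain ⟨r, hr, hrL, hLr⟩ := hL.elim_nhds_subcover V hV
  refine ⟨⋂ y ∈ r, U y, .biInter_of_isOpen hr fun y hy => hU y (hrL y hy),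
    subset_iInter₂ fun y hy => hKU y (hrL y hy), ⋃ y ∈ r, t y,
    hr.biUnion fun y _ => (t y).countable_toSet, ?_⟩
  rintro ⟨x, z⟩ ⟨hx, hz⟩
  obtain ⟨y, hy, hzy⟩ := mem_iUnion₂.1 (hLr hz)
  obtain ⟨i, hi, hxz⟩ := mem_iUnion₂.1 (hUV y (hrL y hy) ⟨mem_iInter₂.1 hx y hy, hzy⟩)
  exact mem_biUnion (mem_biUnion hy hi) hxz

theorem Alster.lindelofSpace_prod [LindelofSpace Y] (h : Alster X) : LindelofSpace (X × Y) := by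
  refine ⟨isLindelof_of_countable_subcover ?_⟩
  intro ι W hW hcov
  have h𝒢K : IsKCover {G : Set X | IsGδ G ∧ ∃ t : Set ι,
      t.Countable ∧ G ×ˢ (univ : Set Y) ⊆ ⋃ i ∈ t, W i} := by
    intro K hK
    obtain ⟨G, hG, hKG, ht⟩ := exists_isGδ_countable_prod_subset hK isLindelof_univ hW
      ((subset_univ _).trans hcov)
    exact ⟨G, ⟨hG, ht⟩, hKG⟩
  obtain ⟨𝒢, h𝒢, h𝒢c, h𝒢X⟩ := h _ (fun _ hG => isGDeltaSet_iff_isGδ.2 hG.1) h𝒢K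
  choose! t htc htW using fun G (hG : G ∈ 𝒢) => (h𝒢 hG).2
  refine ⟨⋃ G ∈ 𝒢, t G, h𝒢c.biUnion htc, ?_⟩
  rintro ⟨x, y⟩ -
  obtain ⟨G, hG, hxG⟩ := sUnion_eq_univ_iff.1 h𝒢X x
  obtain ⟨i, hi, hxy⟩ := mem_iUnion₂.1 (htW G hG (mk_mem_prod hxG (mem_univ y)))
  exact mem_biUnion (mem_biUnion hG hi) hxy

end Lindelof

theorem stmt10_general {X : Type*} [TopologicalSpace X] [CompletelyRegularSpace X]
    (h : CountablyTight (C(X, ℝ) × SequentialFan (Compacts X))) : Alster X := by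
  intro 𝒢 hGδ hcov
  choose G hG hKG using fun K : Compacts X => hcov K K.isCompact
  choose U hU hGU using fun K =>
    isGδ_iff_eq_iInter_nat.1 (isGDeltaSet_iff_isGδ.1 (hGδ (G K) (hG K)))
  obtain ⟨E, hE, hEX⟩ := exists_countable_compacts_forall_mem h hU fun K n =>
    (hKG K).trans ((hGU K).trans_subset (iInter_subset (U K) n))
  refine ⟨G '' E, image_subset_iff.2 fun K _ => hG K, hE.image G, ?_⟩
  refine eq_univ_of_forall fun x => ?_
  obtain ⟨K, hKE, hx⟩ := hEX x
  exact ⟨G K, mem_image_of_mem G hKE, (hGU K).symm ▸ mem_iInter.2 hx⟩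

/-- If `C_k(X)` is productively countably tight, then `X` is productively
Lindelöf. -/
theorem stmt10 {X : Type u} [TopologicalSpace X] [T35Space X]
    (h : ProductivelyCountablyTight C(X, ℝ)) :
    ProductivelyLindelof X := by
  intro Y _ _
  exact (stmt10_general (h _ (SequentialFan.countablyTight _))).lindelofSpace_prod
end

section
/- Let X be a Hausdorff topological space in which every compact subset is a G_δ-set. Then X is strongly Alster if and only if X is hemicompact. -/
open Set Topology

universe u

section

variable {X : Type*} [TopologicalSpace X] {𝒢 : Set (Set X)}

theorem IsKCover.nonempty (h𝒢 : IsKCover 𝒢) : 𝒢.Nonempty :=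
  let ⟨G, hG, _⟩ := h𝒢 ∅ isCompact_empty
  ⟨G, hG⟩

theorem hemicompact_iff_exists_countable_isKCover :
    Hemicompact X ↔ ∃ 𝒦 : Set (Set X), 𝒦.Countable ∧ (∀ K ∈ 𝒦, IsCompact K) ∧ IsKCover 𝒦 := by
  constructor
  · rintro ⟨K, hK, hcofinal⟩
    refine ⟨range K, countable_range K, forall_mem_range.2 hK, fun C hC => ?_⟩
    exact exists_range_iff.2 (hcofinal C hC)
  · rintro ⟨𝒦, hcountable, hcompact, hcover⟩
    obtain ⟨K, rfl⟩ := hcountable.exists_eq_range hcover.nonempty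
    exact ⟨K, forall_mem_range.1 hcompact, fun C hC => exists_range_iff.1 (hcover C hC)⟩

theorem Hemicompact.exists_countable_isKCover_subset (hX : Hemicompact X) (h𝒢 : IsKCover 𝒢) :
    ∃ 𝒢' ⊆ 𝒢, 𝒢'.Countable ∧ IsKCover 𝒢' := by
  obtain ⟨𝒦, hcountable, hcompact, hcover⟩ := hemicompact_iff_exists_countable_isKCover.1 hX
  choose! G hG hsub using fun K hK => h𝒢 K (hcompact K hK)
  refine ⟨G '' 𝒦, image_subset_iff.2 hG, hcountable.image G, fun C hC => ?_⟩
  obtain ⟨K, hK, hCK⟩ := hcover C hC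
  exact ⟨G K, mem_image_of_mem G hK, hCK.trans (hsub K hK)⟩

theorem Hemicompact.stronglyAlster (hX : Hemicompact X) : StronglyAlster X :=
  fun _ _ h𝒢 => hX.exists_countable_isKCover_subset h𝒢

theorem StronglyAlster.hemicompact (hX : StronglyAlster X)
    (h : IsKCover {K : Set X | IsCompact K ∧ IsGDeltaSet K}) : Hemicompact X := by
  obtain ⟨𝒦, hsub, hcountable, hcover⟩ := hX _ (fun _ hK => hK.2) h
  exact hemicompact_iff_exists_countable_isKCover.2
    ⟨𝒦, hcountable, fun _ hK => (hsub hK).1, hcover⟩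

theorem stmt16_general (h : IsKCover {K : Set X | IsCompact K ∧ IsGDeltaSet K}) :
    StronglyAlster X ↔ Hemicompact X :=
  ⟨fun hX => hX.hemicompact h, Hemicompact.stronglyAlster⟩

end

/-- In a Hausdorff space in which every compact subset is a `G_δ`-set,
strongly Alster is equivalent to hemicompactness. -/
theorem stmt16 {X : Type*} [TopologicalSpace X] [T2Space X]
    (h : ∀ K : Set X, IsCompact K → IsGDeltaSet K) :
    StronglyAlster X ↔ Hemicompact X :=
  stmt16_general fun K hK => ⟨K, ⟨hK, h K hK⟩, Subset.rfl⟩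
end
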